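/- Let λ = (λ_1 ≥ … ≥ λ_k ≥ 1) be a partition with k positive parts, let 0 ≤ t ≤ k−1, and let n ≥ k. Set μ := (λ_1,…,λ_t, λ_{t+2}−1, …, λ_k−1), ν := (λ_1+1,…,λ_t+1, λ_{t+2},…,λ_k), and ρ := (λ_1−1,…,λ_k−1). Then, as polynomials in x_1,…,x_n: s^{[n]}_{λ/1} · s^{[n]}_μ = s^{[n]}_{μ/1} · s^{[n]}_λ + s^{[n]}_ρ · s^{[n]}_ν. -/

import Mathlib

/-- A semistandard Young tableau of shape `(lam 0, lam 1, …, lam (k-1))` (so `lam i` is the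
length of the `(i+1)`-st row), with entries in `{a, a+1, …, b}`: rows weakly increase,
columns strictly increase.  Entries outside the shape are `0`. -/
structure SSYT (k : ℕ) (lam : ℕ → ℤ) (a b : ℕ) where
  entry : ℕ → ℕ → ℕ
  zero_outside : ∀ i j : ℕ, ¬(i < k ∧ (j : ℤ) < lam i) → entry i j = 0
  lower : ∀ i j : ℕ, i < k → (j : ℤ) < lam i → a ≤ entry i j
  upper : ∀ i j : ℕ, i < k → (j : ℤ) < lam i → entry i j ≤ b
  row_weak : ∀ i j₁ j₂ : ℕ, i < k → j₁ ≤ j₂ → (j₂ : ℤ) < lam i → entry i j₁ ≤ entry i j₂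
  col_strict : ∀ i₁ i₂ j : ℕ, i₁ < i₂ → i₂ < k → (j : ℤ) < lam i₂ → entry i₁ j < entry i₂ j

/-- The monomial `Π_i x_i^{m(i,T)}` of a tableau: the product of `x_{T(c)}` over the
cells `c` of the shape. -/
noncomputable def SSYT.weight {k : ℕ} {lam : ℕ → ℤ} {a b : ℕ} (T : SSYT k lam a b) :
    MvPolynomial ℕ ℤ :=
  ∏ i ∈ Finset.range k, ∏ j ∈ Finset.range (lam i).toNat, MvPolynomial.X (T.entry i j)

/-- `(lam 0, …, lam (k-1))` is a partition: weakly decreasing with nonnegative entries. -/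
def IsPartitionSeq (k : ℕ) (lam : ℕ → ℤ) : Prop :=
  (∀ i, i + 1 < k → lam (i + 1) ≤ lam i) ∧ (∀ i, i < k → 0 ≤ lam i)

/-- The Schur polynomial `s^{[a,b]}_lam = Σ_T Π_i x_i^{m(i,T)}`, the sum running over all
semistandard Young tableaux of shape `lam` with entries in `{a,…,b}`; by convention it is
`0` if `lam` is not a partition. -/
noncomputable def schur (k : ℕ) (lam : ℕ → ℤ) (a b : ℕ) : MvPolynomial ℕ ℤ :=
  letI := Classical.dec (IsPartitionSeq k lam)
  if IsPartitionSeq k lam then ∑ᶠ T : SSYT k lam a b, T.weight else 0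

/-- The skew Schur polynomial `s^{[a,b]}_{α/1} = Σ_β s^{[a,b]}_β`, where `β` runs over the
partitions obtained from `α` by removing a single box (removals yielding non-partitions
contribute `0` by the convention built into `schur`). -/
noncomputable def schurSkew1 (k : ℕ) (lam : ℕ → ℤ) (a b : ℕ) : MvPolynomial ℕ ℤ :=
  ∑ i ∈ Finset.range k, schur k (Function.update lam i (lam i - 1)) a b

theorem SSYT.ext_entry {k : ℕ} {lam : ℕ → ℤ} {a b : ℕ} {T U : SSYT k lam a b}
    (h : T.entry = U.entry) : T = U := by
  cases T; cases U; cases h; rfl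

theorem SSYT.entry_le {k : ℕ} {lam : ℕ → ℤ} {a b : ℕ} (T : SSYT k lam a b) (i j : ℕ) :
    T.entry i j ≤ b := by
  by_cases h : i < k ∧ (j : ℤ) < lam i
  · exact T.upper i j h.1 h.2
  · rw [T.zero_outside i j h]; exact Nat.zero_le _

instance SSYT.instFinite (k : ℕ) (lam : ℕ → ℤ) (a b : ℕ) : Finite (SSYT k lam a b) := by
  let f : SSYT k lam a b → ((i : Fin k) → Fin (lam i).toNat → Fin (b + 1)) :=
    fun T i j => ⟨T.entry i j, Nat.lt_succ_of_le (T.entry_le i j)⟩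
  apply Finite.of_injective f
  intro T U h
  apply SSYT.ext_entry
  funext i j
  by_cases hij : i < k ∧ (j : ℤ) < lam i
  · have h1 := congrFun (congrFun h ⟨i, hij.1⟩) ⟨j, by simp; exact hij.2⟩
    simpa [f] using h1
  · rw [T.zero_outside i j hij, U.zero_outside i j hij]

noncomputable instance SSYT.instFintype (k : ℕ) (lam : ℕ → ℤ) (a b : ℕ) :
    Fintype (SSYT k lam a b) := Fintype.ofFinite _

theorem schur_of_partition {k : ℕ} {lam : ℕ → ℤ} (a b : ℕ) (h : IsPartitionSeq k lam) :
    schur k lam a b = ∑ T : SSYT k lam a b, T.weight := by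
  unfold schur
  rw [if_pos h, finsum_eq_sum_of_fintype]

theorem schur_of_not_partition {k : ℕ} {lam : ℕ → ℤ} (a b : ℕ) (h : ¬ IsPartitionSeq k lam) :
    schur k lam a b = 0 := by
  unfold schur
  rw [if_neg h]

theorem IsPartitionSeq.anti {k : ℕ} {lam : ℕ → ℤ} (h : IsPartitionSeq k lam) {i i' : ℕ}
    (hii : i ≤ i') (hi : i' < k) : lam i' ≤ lam i := by
  induction i', hii using Nat.le_induction with
  | base => exact le_rfl
  | succ m hm ih => exact (h.1 m hi).trans (ih (by omega))

/-- Padding by zero. -/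
def padz (k : ℕ) (lam : ℕ → ℤ) : ℕ → ℤ := fun i => if i < k then lam i else 0

theorem padz_lt {k : ℕ} {lam : ℕ → ℤ} {i : ℕ} (h : i < k) : padz k lam i = lam i := if_pos h
theorem padz_ge {k : ℕ} {lam : ℕ → ℤ} {i : ℕ} (h : k ≤ i) : padz k lam i = 0 :=
  if_neg (by omega)

theorem IsPartitionSeq.padz {k : ℕ} {lam : ℕ → ℤ} (h : IsPartitionSeq k lam) (n : ℕ) :
    IsPartitionSeq n (padz k lam) := by
  constructor
  · intro i _
    by_cases h1 : i + 1 < k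
    · rw [padz_lt h1, padz_lt (by omega)]; exact h.1 i h1
    · rw [padz_ge (by omega)]
      by_cases h2 : i < k
      · rw [padz_lt h2]; exact h.2 i h2
      · rw [padz_ge (by omega)]
  · intro i _
    by_cases h2 : i < k
    · rw [padz_lt h2]; exact h.2 i h2
    · rw [padz_ge (by omega)]

theorem padz_cell {k n : ℕ} (hkn : k ≤ n) (lam : ℕ → ℤ) (i j : ℕ) :
    (i < n ∧ (j : ℤ) < padz k lam i) ↔ (i < k ∧ (j : ℤ) < lam i) := by
  unfold padz
  split_ifs with h
  · constructor
    · rintro ⟨_, h2⟩; exact ⟨h, h2⟩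
    · rintro ⟨_, h2⟩; exact ⟨by omega, h2⟩
  · constructor
    · rintro ⟨_, h2⟩; omega
    · rintro ⟨h1, _⟩; exact absurd h1 h

/-- Transport of tableaux between shapes with the same cells. -/
def SSYT.congrCells {k k' : ℕ} {lam lam' : ℕ → ℤ} {a b : ℕ}
    (h : ∀ i j : ℕ, (i < k' ∧ (j : ℤ) < lam' i) ↔ (i < k ∧ (j : ℤ) < lam i))
    (T : SSYT k lam a b) : SSYT k' lam' a b where
  entry := T.entry
  zero_outside i j hh := T.zero_outside i j (by rwa [h] at hh)
  lower i j h1 h2 := T.lower i j ((h i j).1 ⟨h1, h2⟩).1 ((h i j).1 ⟨h1, h2⟩).2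
  upper i j h1 h2 := T.upper i j ((h i j).1 ⟨h1, h2⟩).1 ((h i j).1 ⟨h1, h2⟩).2
  row_weak i j₁ j₂ h1 h2 h3 :=
    T.row_weak i j₁ j₂ ((h i j₂).1 ⟨h1, h3⟩).1 h2 ((h i j₂).1 ⟨h1, h3⟩).2
  col_strict i₁ i₂ j h1 h2 h3 :=
    T.col_strict i₁ i₂ j h1 ((h i₂ j).1 ⟨h2, h3⟩).1 ((h i₂ j).1 ⟨h2, h3⟩).2

theorem schur_padz {k n : ℕ} (hkn : k ≤ n) {lam : ℕ → ℤ} (h : IsPartitionSeq k lam) (a b : ℕ) :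
    schur k lam a b = schur n (padz k lam) a b := by
  rw [schur_of_partition a b h, schur_of_partition a b (h.padz n)]
  refine Finset.sum_bij' (fun T _ => T.congrCells (padz_cell hkn lam))
    (fun T _ => T.congrCells (fun i j => (padz_cell hkn lam i j).symm)) ?_ ?_ ?_ ?_ ?_
  · intros; exact Finset.mem_univ _
  · intros; exact Finset.mem_univ _
  · intros; rfl
  · intros; rfl
  · intro T _
    unfold SSYT.weight
    have h1 : Finset.range k ⊆ Finset.range n := by
      intro i; simp; omega
    rw [← Finset.prod_subset h1]
    · refine Finset.prod_congr rfl fun i hi => ?_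
      rw [padz_lt (by simpa using hi)]
      rfl
    · intro i _ hi
      rw [padz_ge (by simpa using hi)]
      simp

theorem exists_cut (N : ℤ) (p : ℕ → Prop)
    (hp : ∀ j₁ j₂ : ℕ, j₁ ≤ j₂ → (j₂ : ℤ) < N → p j₂ → p j₁) :
    ∃ c : ℤ, 0 ≤ c ∧ ∀ j : ℕ, (j : ℤ) < c ↔ ((j : ℤ) < N ∧ p j) := by
  classical
  have hex : ∃ j : ℕ, ¬ ((j : ℤ) < N ∧ p j) := ⟨N.toNat, fun h => by have := h.1; omega⟩
  refine ⟨(Nat.find hex : ℤ), by omega, fun j => ?_⟩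
  constructor
  · intro hj
    have := Nat.find_min hex (m := j) (by omega)
    exact not_not.1 this
  · rintro ⟨h1, h2⟩
    by_contra hcon
    have hle : Nat.find hex ≤ j := by omega
    exact Nat.find_spec hex ⟨by omega, hp _ _ hle h1 h2⟩

theorem SSYT.exists_shape {n : ℕ} {lam : ℕ → ℤ} (T : SSYT (n + 1) lam 1 (n + 1)) :
    ∃ m : Fin n → ℤ, ∀ i : Fin n, 0 ≤ m i ∧
      ∀ j : ℕ, (j : ℤ) < m i ↔ ((j : ℤ) < lam i ∧ T.entry i j ≤ n) := by
  have := fun i : Fin n => exists_cut (lam i) (fun j => T.entry i j ≤ n)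
    (fun j₁ j₂ h1 h2 h3 => (T.row_weak i j₁ j₂ (by omega) h1 h2).trans h3)
  choose m hm using this
  exact ⟨m, hm⟩

/-- Number of entries at most `n` in each row. -/
noncomputable def SSYT.cut {n : ℕ} {lam : ℕ → ℤ} (T : SSYT (n + 1) lam 1 (n + 1)) : Fin n → ℤ :=
  T.exists_shape.choose

theorem SSYT.cut_nonneg {n : ℕ} {lam : ℕ → ℤ} (T : SSYT (n + 1) lam 1 (n + 1)) (i : Fin n) :
    0 ≤ T.cut i := (T.exists_shape.choose_spec i).1

theorem SSYT.lt_cut {n : ℕ} {lam : ℕ → ℤ} (T : SSYT (n + 1) lam 1 (n + 1)) (i : Fin n) (j : ℕ) :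
    (j : ℤ) < T.cut i ↔ ((j : ℤ) < lam i ∧ T.entry i j ≤ n) :=
  (T.exists_shape.choose_spec i).2 j

theorem int_eq_of_forall_nat_lt {a b : ℤ} (ha : 0 ≤ a) (hb : 0 ≤ b)
    (h : ∀ j : ℕ, (j : ℤ) < a ↔ (j : ℤ) < b) : a = b := by
  have h1 := h a.toNat
  have h2 := h b.toNat
  omega

theorem SSYT.row_lower {k : ℕ} {lam : ℕ → ℤ} {b : ℕ} (hl : IsPartitionSeq k lam)
    (T : SSYT k lam 1 b) (i j : ℕ) (hi : i < k) (hj : (j : ℤ) < lam i) :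
    i + 1 ≤ T.entry i j := by
  induction i with
  | zero => exact T.lower 0 j hi hj
  | succ i ih =>
    have h1 := ih (by omega) (lt_of_lt_of_le hj (hl.1 i hi))
    have h2 := T.col_strict i (i + 1) j (by omega) hi hj
    omega

/-- Extension by zero of a finite sequence. -/
def extz {n : ℕ} (m : Fin n → ℤ) : ℕ → ℤ := fun i => if h : i < n then m ⟨i, h⟩ else 0

theorem extz_lt {n : ℕ} (m : Fin n → ℤ) {i : ℕ} (h : i < n) : extz m i = m ⟨i, h⟩ := dif_pos h

theorem extz_fin {n : ℕ} (m : Fin n → ℤ) (i : Fin n) : extz m i = m i := extz_lt m i.2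

theorem SSYT.lt_extz_cut {n : ℕ} {lam : ℕ → ℤ} (T : SSYT (n + 1) lam 1 (n + 1)) (i j : ℕ)
    (hi : i < n) :
    (j : ℤ) < extz T.cut i ↔ ((j : ℤ) < lam i ∧ T.entry i j ≤ n) := by
  rw [extz_lt _ hi]; exact T.lt_cut ⟨i, hi⟩ j

/-- Removing the entries `n+1`. -/
noncomputable def SSYT.restrict {n : ℕ} {lam : ℕ → ℤ} (T : SSYT (n + 1) lam 1 (n + 1))
    {m : Fin n → ℤ} (hm : T.cut = m) : SSYT n (extz m) 1 n where
  entry i j := if i < n ∧ (j : ℤ) < extz m i then T.entry i j else 0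
  zero_outside i j h := if_neg h
  lower i j h1 h2 := by
    rw [if_pos ⟨h1, h2⟩]
    subst hm
    exact T.lower i j (by omega) ((T.lt_extz_cut i j h1).1 h2).1
  upper i j h1 h2 := by
    rw [if_pos ⟨h1, h2⟩]
    subst hm
    exact ((T.lt_extz_cut i j h1).1 h2).2
  row_weak i j₁ j₂ h1 h2 h3 := by
    rw [if_pos (⟨h1, h3⟩ : i < n ∧ (j₂ : ℤ) < extz m i),
      if_pos (⟨h1, by omega⟩ : i < n ∧ (j₁ : ℤ) < extz m i)]
    subst hm
    exact T.row_weak i j₁ j₂ (by omega) h2 ((T.lt_extz_cut i j₂ h1).1 h3).1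
  col_strict i₁ i₂ j h1 h2 h3 := by
    rw [if_pos (⟨h2, h3⟩ : i₂ < n ∧ (j : ℤ) < extz m i₂)]
    subst hm
    have h4 := (T.lt_extz_cut i₂ j h2).1 h3
    have h5 := T.col_strict i₁ i₂ j h1 (by omega) h4.1
    split_ifs with h6
    · exact h5
    · omega

theorem extz_partition {n : ℕ} {lam : ℕ → ℤ} (hl : IsPartitionSeq (n + 1) lam) {m : Fin n → ℤ}
    (hm : ∀ i : Fin n, lam (i + 1) ≤ m i ∧ m i ≤ lam i) : IsPartitionSeq n (extz m) := by
  constructor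
  · intro i hi
    rw [extz_lt m hi, extz_lt m (by omega : i < n)]
    have h1 := (hm ⟨i + 1, hi⟩).2
    have h2 := (hm ⟨i, by omega⟩).1
    exact h1.trans h2
  · intro i hi
    rw [extz_lt m hi]
    exact (hl.2 (i + 1) (by omega)).trans (hm ⟨i, hi⟩).1

/-- Adding entries `n+1`. -/
noncomputable def SSYT.extend {n : ℕ} {lam : ℕ → ℤ} (hl : IsPartitionSeq (n + 1) lam)
    {m : Fin n → ℤ} (hm : ∀ i : Fin n, lam (i + 1) ≤ m i ∧ m i ≤ lam i)
    (T : SSYT n (extz m) 1 n) : SSYT (n + 1) lam 1 (n + 1) where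
  entry i j := if i < n ∧ (j : ℤ) < extz m i then T.entry i j else
    if i < n + 1 ∧ (j : ℤ) < lam i then n + 1 else 0
  zero_outside i j h := by
    rw [if_neg, if_neg h]
    rintro ⟨h1, h2⟩
    rw [extz_lt m h1] at h2
    exact h ⟨by omega, lt_of_lt_of_le h2 (hm ⟨i, h1⟩).2⟩
  lower i j h1 h2 := by
    split_ifs with h3 h4
    · exact T.lower i j h3.1 h3.2
    · omega
    · exact absurd ⟨h1, h2⟩ h4
  upper i j h1 h2 := by
    split_ifs with h3
    · exact (T.upper i j h3.1 h3.2).trans (by omega)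
    · omega
    · omega
  row_weak i j₁ j₂ h1 h2 h3 := by
    by_cases h4 : i < n ∧ (j₂ : ℤ) < extz m i
    · rw [if_pos h4, if_pos ⟨h4.1, by omega⟩]
      exact T.row_weak i j₁ j₂ h4.1 h2 h4.2
    · rw [if_neg h4, if_pos (⟨h1, h3⟩ : i < n + 1 ∧ (j₂ : ℤ) < lam i)]
      split_ifs with h5
      · exact (T.upper i j₁ h5.1 h5.2).trans (by omega)
      · omega
      · omega
  col_strict i₁ i₂ j h1 h2 h3 := by
    have h6 : i₁ < n := by omega
    have h7 : (j : ℤ) < extz m i₁ := by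
      rw [extz_lt m h6]
      exact lt_of_lt_of_le h3 ((hl.anti (show i₁ + 1 ≤ i₂ by omega) h2).trans (hm ⟨i₁, h6⟩).1)
    rw [if_pos (⟨h6, h7⟩ : i₁ < n ∧ (j : ℤ) < extz m i₁)]
    split_ifs with h4
    · exact T.col_strict i₁ i₂ j h1 h4.1 h4.2
    · have := T.upper i₁ j h6 h7
      omega
    · rename_i h8
      exact absurd ⟨h2, h3⟩ h8

theorem SSYT.cut_bounds {n : ℕ} {lam : ℕ → ℤ} (hl : IsPartitionSeq (n + 1) lam)
    (T : SSYT (n + 1) lam 1 (n + 1)) (i : Fin n) :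
    lam (i + 1) ≤ T.cut i ∧ T.cut i ≤ lam i := by
  have h0 := T.cut_nonneg i
  have hi := i.2
  constructor
  · by_contra hcon
    push Not at hcon
    have h1 := T.lt_cut i (T.cut i).toNat
    have h2 : (((T.cut i).toNat : ℕ) : ℤ) = T.cut i := by omega
    have h3 := T.col_strict i (i + 1) (T.cut i).toNat (by omega) (by omega) (by omega)
    have h4 := T.upper (i + 1) (T.cut i).toNat (by omega) (by omega)
    have h5 := hl.1 i (by omega)
    have := h1.2 ⟨by omega, by omega⟩
    omega
  · by_contra hcon
    push Not at hcon
    have h1 := (T.lt_cut i (lam i).toNat).1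
    have h5 := hl.2 i (by omega)
    have := (h1 (by omega)).1
    omega

theorem SSYT.cut_extend {n : ℕ} {lam : ℕ → ℤ} (hl : IsPartitionSeq (n + 1) lam)
    {m : Fin n → ℤ} (hm : ∀ i : Fin n, lam (i + 1) ≤ m i ∧ m i ≤ lam i)
    (T : SSYT n (extz m) 1 n) : (SSYT.extend hl hm T).cut = m := by
  funext i
  have hi := i.2
  have hmi : 0 ≤ m i := (hl.2 (i + 1) (by omega)).trans (hm i).1
  refine int_eq_of_forall_nat_lt (SSYT.cut_nonneg _ i) hmi fun j => ?_
  rw [SSYT.lt_cut]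
  constructor
  · rintro ⟨h1, h2⟩
    by_contra h3
    have : (SSYT.extend hl hm T).entry i j = n + 1 := by
      change (if _ then _ else _) = _
      rw [if_neg, if_pos ⟨by omega, h1⟩]
      rintro ⟨_, h5⟩
      rw [extz_fin] at h5
      exact h3 h5
    omega
  · intro h1
    refine ⟨lt_of_lt_of_le h1 (hm i).2, ?_⟩
    have h2 : (j : ℤ) < extz m i := by rwa [extz_fin]
    change (if _ then _ else _) ≤ _
    rw [if_pos ⟨hi, h2⟩]
    exact T.upper i j hi h2

theorem SSYT.weight_restrict {n : ℕ} {lam : ℕ → ℤ} (hl : IsPartitionSeq (n + 1) lam)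
    (T : SSYT (n + 1) lam 1 (n + 1)) {m : Fin n → ℤ} (hm : T.cut = m) :
    T.weight = (T.restrict hm).weight *
      ((∏ i : Fin n, MvPolynomial.X (n + 1) ^ (lam i - m i).toNat) *
        MvPolynomial.X (n + 1) ^ (lam n).toNat) := by
  unfold SSYT.weight
  rw [Finset.prod_range_succ, ← mul_assoc]
  congr 1
  · rw [Finset.prod_range, Finset.prod_range, ← Finset.prod_mul_distrib]
    refine Finset.prod_congr rfl fun i _ => ?_
    have hi := i.2
    have hb := T.cut_bounds hl i
    have hc := T.cut_nonneg i
    rw [hm] at hb hc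
    rw [extz_fin, ← Finset.prod_range_mul_prod_Ico _ (by omega : (m i).toNat ≤ (lam i).toNat)]
    congr 1
    · refine Finset.prod_congr rfl fun j hj => ?_
      rw [Finset.mem_range] at hj
      have h2 : (j : ℤ) < extz m i := by rw [extz_fin]; omega
      change _ = MvPolynomial.X (if _ then _ else _)
      rw [if_pos ⟨hi, h2⟩]
    · rw [Finset.prod_congr rfl (g := fun _ => MvPolynomial.X (n + 1))]
      · rw [Finset.prod_const, Nat.card_Ico]
        congr 1
        omega
      · intro j hj
        rw [Finset.mem_Ico] at hj
        congr 1
        have h1 := T.lt_cut i j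
        rw [hm] at h1
        have h2 := T.upper i j (by omega) (by omega)
        have h3 : ¬ T.entry i j ≤ n := fun h => by
          have := h1.2 ⟨by omega, h⟩
          omega
        omega
  · rw [Finset.prod_congr rfl (g := fun _ => MvPolynomial.X (n + 1))]
    · rw [Finset.prod_const, Finset.card_range]
    · intro j hj
      rw [Finset.mem_range] at hj
      congr 1
      have h1 := T.row_lower hl n j (by omega) (by omega)
      have h2 := T.upper n j (by omega) (by omega)
      omega

theorem schur_branch {n : ℕ} {lam : ℕ → ℤ} (hl : IsPartitionSeq (n + 1) lam) :
    schur (n + 1) lam 1 (n + 1) =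
      ∑ m ∈ Fintype.piFinset (fun i : Fin n => Finset.Icc (lam (i + 1)) (lam i)),
        schur n (extz m) 1 n *
          ((∏ i : Fin n, MvPolynomial.X (n + 1) ^ (lam i - m i).toNat) *
            MvPolynomial.X (n + 1) ^ (lam n).toNat) := by
  classical
  rw [schur_of_partition _ _ hl]
  rw [← Finset.sum_fiberwise_of_maps_to (g := SSYT.cut)
    (t := Fintype.piFinset (fun i : Fin n => Finset.Icc (lam (i + 1)) (lam i)))]
  swap
  · intro T _
    rw [Fintype.mem_piFinset]
    intro i
    rw [Finset.mem_Icc]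
    exact T.cut_bounds hl i
  refine Finset.sum_congr rfl fun m hm => ?_
  have hm' : ∀ i : Fin n, lam (i + 1) ≤ m i ∧ m i ≤ lam i := by
    intro i
    have := Fintype.mem_piFinset.1 hm i
    rwa [Finset.mem_Icc] at this
  rw [schur_of_partition _ _ (extz_partition hl hm'), Finset.sum_mul]
  refine Finset.sum_bij' (fun T hT => T.restrict (Finset.mem_filter.1 hT).2)
    (fun T _ => SSYT.extend hl hm' T) ?_ ?_ ?_ ?_ ?_
  · intros; exact Finset.mem_univ _
  · intro T _
    exact Finset.mem_filter.2 ⟨Finset.mem_univ _, SSYT.cut_extend hl hm' T⟩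
  · intro T hT
    have hc := (Finset.mem_filter.1 hT).2
    subst hc
    apply SSYT.ext_entry
    funext i j
    change (if _ then (if _ then _ else _) else _) = _
    by_cases h1 : i < n ∧ (j : ℤ) < extz T.cut i
    · rw [if_pos h1, if_pos h1]
    · rw [if_neg h1]
      split_ifs with h2
      · have h3 := T.upper i j h2.1 h2.2
        by_cases h4 : i < n
        · have h5 := T.lt_extz_cut i j h4
          have h6 : ¬ T.entry i j ≤ n := fun h => h1 ⟨h4, h5.2 ⟨h2.2, h⟩⟩
          omega
        · have h5 : i = n := by omega
          subst h5
          have := T.row_lower hl i j h2.1 h2.2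
          omega
      · exact (T.zero_outside i j h2).symm
  · intro T hT
    apply SSYT.ext_entry
    funext i j
    change (if _ then (if _ then _ else _) else _) = _
    by_cases h1 : i < n ∧ (j : ℤ) < extz m i
    · rw [if_pos h1, if_pos h1]
    · rw [if_neg h1, T.zero_outside i j h1]
  · intro T hT
    exact T.weight_restrict hl _

section Determinants

variable {K : Type*} [Field K]

/-- The alternant `det (x_i ^ l_j)`. -/
noncomputable def altDet (x : ℕ → K) (n : ℕ) (l : ℕ → ℤ) : K :=
  Matrix.det (Matrix.of fun j i : Fin n => x i ^ l j)

/-- Exponent sequence of a shape. -/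
def expo (n : ℕ) (lam : ℕ → ℤ) : ℕ → ℤ := fun j => lam j + n - 1 - j

/-- The Vandermonde product. -/
noncomputable def vdm (x : ℕ → K) : ℕ → K
  | 0 => 1
  | n + 1 => vdm x n * ∏ i : Fin n, (x i - x n)

theorem vdm_ne_zero {x : ℕ → K} (hx : Function.Injective x) (n : ℕ) : vdm x n ≠ 0 := by
  induction n with
  | zero => exact one_ne_zero
  | succ n ih =>
    refine mul_ne_zero ih (Finset.prod_ne_zero_iff.2 fun i _ => sub_ne_zero.2 fun h => ?_)
    have := hx h
    have := i.2
    omega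

theorem geo_zpow {y z : K} (hy : y ≠ 0) (hz : z ≠ 0) (c a b : ℤ) (hab : a ≤ b) :
    y ^ (b + 1 + c) - z ^ (b - a + 1) * y ^ (a + c) =
      (y - z) * ∑ m ∈ Finset.Icc a b, y ^ (m + c) * z ^ (b - m) := by
  induction b, hab using Int.leInduction with
  | base =>
    rw [Finset.Icc_self, Finset.sum_singleton, sub_self, zpow_zero, zero_add, zpow_one,
      show a + 1 + c = (a + c) + 1 by ring, zpow_add_one₀ hy]
    ring
  | succ b hb ih =>
    have h1 : Finset.Icc a (b + 1) = insert (b + 1) (Finset.Icc a b) := by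
      ext m; simp only [Finset.mem_Icc, Finset.mem_insert]; omega
    have h2 : ∑ m ∈ Finset.Icc a b, y ^ (m + c) * z ^ (b + 1 - m) =
        z * ∑ m ∈ Finset.Icc a b, y ^ (m + c) * z ^ (b - m) := by
      rw [Finset.mul_sum]
      refine Finset.sum_congr rfl fun m _ => ?_
      rw [show b + 1 - m = (b - m) + 1 by ring, zpow_add_one₀ hz]
      ring
    rw [h1, Finset.sum_insert (by simp), h2, sub_self, zpow_zero, mul_add,
      mul_left_comm (y - z) z, ← ih,
      show b + 1 + 1 + c = (b + 1 + c) + 1 by ring, zpow_add_one₀ hy,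
      show b + 1 - a + 1 = (b - a + 1) + 1 by ring, zpow_add_one₀ hz]
    ring

theorem det_row_ops {n : ℕ} {A B : Matrix (Fin (n + 1)) (Fin (n + 1)) K} (c : Fin n → K)
    (h0 : ∀ i, A (Fin.last n) i = B (Fin.last n) i)
    (h1 : ∀ (j : Fin n) i, B j.castSucc i = A j.castSucc i - c j * A j.succ i) :
    A.det = B.det := by
  rw [← Matrix.det_submatrix_equiv_self Fin.revPerm A,
    ← Matrix.det_submatrix_equiv_self Fin.revPerm B]
  refine Matrix.det_eq_of_forall_row_eq_smul_add_pred (fun j => c j.rev) ?_ ?_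
  · intro i
    simp [h0]
  · intro j i
    simp [h1, Fin.rev_succ, Fin.rev_castSucc]

theorem altDet_branch {x : ℕ → K} (hx : ∀ i, x i ≠ 0) (n : ℕ) (lam : ℕ → ℤ)
    (hl : ∀ i, i + 1 < n + 1 → lam (i + 1) ≤ lam i) :
    altDet x (n + 1) (expo (n + 1) lam) = (∏ i : Fin n, (x i - x n)) *
      ∑ m ∈ Fintype.piFinset (fun i : Fin n => Finset.Icc (lam (i + 1)) (lam i)),
        altDet x n (expo n (extz m)) *
          ((∏ i : Fin n, x n ^ (lam i - m i)) * x n ^ (lam n)) := by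
  set l := expo (n + 1) lam with hldef
  let B : Matrix (Fin (n + 1)) (Fin (n + 1)) K := Matrix.of fun j i =>
    if (j : ℕ) < n then x i ^ l j - x n ^ (l j - l (j + 1)) * x i ^ l (j + 1) else x i ^ l j
  have hAB : altDet x (n + 1) l = B.det := by
    refine det_row_ops (fun j => x n ^ (l j - l (j + 1))) ?_ ?_
    · intro i; simp [B]
    · intro j i; simp [B]
  have hln : l n = lam n := by simp only [hldef, expo]; push_cast; ring
  rw [hAB, Matrix.det_succ_column B (Fin.last n), Fin.sum_univ_castSucc]
  have hz : ∑ i : Fin n, (-1 : K) ^ ((i.castSucc : ℕ) + (Fin.last n : ℕ)) *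
      B i.castSucc (Fin.last n) *
      (B.submatrix i.castSucc.succAbove (Fin.last n).succAbove).det = 0 := by
    refine Finset.sum_eq_zero fun i _ => ?_
    have : B i.castSucc (Fin.last n) = 0 := by
      simp only [B, Matrix.of_apply, Fin.val_castSucc, i.2, if_true, Fin.val_last]
      rw [← zpow_add₀ (hx n), sub_add_cancel, sub_self]
    rw [this]; ring
  rw [hz, zero_add, Even.neg_one_pow ⟨_, rfl⟩, one_mul]
  have hBn : B (Fin.last n) (Fin.last n) = x n ^ lam n := by
    simp [B, hln]
  rw [hBn]
  have hminor : B.submatrix (Fin.last n).succAbove (Fin.last n).succAbove =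
      Matrix.of fun j i : Fin n => (x i - x n) *
        (Matrix.of fun j i : Fin n => ∑ m ∈ Finset.Icc (lam (j + 1)) (lam j),
          x i ^ (m + ((n : ℤ) - 1 - j)) * x n ^ (lam j - m)) j i := by
    ext j i
    have hj := j.2
    simp only [B, Matrix.submatrix_apply, Matrix.of_apply, Fin.succAbove_last, Fin.val_castSucc,
      hj, if_true]
    rw [← geo_zpow (hx i) (hx n) _ _ _ (hl j (by omega))]
    simp only [hldef, expo]
    congr 3
    · push_cast; ring
    · push_cast; ring
    · push_cast; ring
  rw [hminor, Matrix.det_mul_row]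
  rw [mul_left_comm]
  congr 1
  have hsum : (Matrix.of fun j i : Fin n => ∑ m ∈ Finset.Icc (lam (j + 1)) (lam j),
      x i ^ (m + ((n : ℤ) - 1 - j)) * x n ^ (lam j - m)) =
      fun j : Fin n => ∑ m ∈ Finset.Icc (lam (j + 1)) (lam j),
        (fun i : Fin n => x n ^ (lam j - m) * x i ^ (m + ((n : ℤ) - 1 - j))) := by
    ext j i
    simp only [Matrix.of_apply, Finset.sum_apply]
    exact Finset.sum_congr rfl fun m _ => mul_comm _ _
  have key := (Matrix.detRowAlternating (R := K) (n := Fin n)).toMultilinearMap.map_sum_finset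
    (fun (j : Fin n) (m : ℤ) =>
        (fun i : Fin n => x n ^ (lam j - m) * x i ^ (m + ((n : ℤ) - 1 - j))))
    (fun j : Fin n => Finset.Icc (lam (j + 1)) (lam j))
  rw [hsum]
  change _ * (Matrix.detRowAlternating (R := K) (n := Fin n)).toMultilinearMap _ = _
  rw [key, Finset.mul_sum]
  refine Finset.sum_congr rfl fun m _ => ?_
  have h3 := Matrix.det_mul_column (fun j : Fin n => x n ^ (lam j - m j))
    (Matrix.of fun j i : Fin n => x i ^ (m j + ((n : ℤ) - 1 - j)))
  change _ * Matrix.det (Matrix.of fun j i : Fin n =>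
    x n ^ (lam j - m j) * (Matrix.of fun j i : Fin n => x i ^ (m j + ((n : ℤ) - 1 - j))) j i) = _
  rw [h3]
  have h4 : altDet x n (expo n (extz m)) =
      (Matrix.of fun j i : Fin n => x i ^ (m j + ((n : ℤ) - 1 - j))).det := by
    unfold altDet expo
    congr 1
    ext j i
    simp only [Matrix.of_apply, extz_fin]
    congr 1
    ring
  rw [h4]
  ring

theorem bialternant (φ : MvPolynomial ℕ ℤ →+* K)
    (hx : ∀ i, φ (MvPolynomial.X (i + 1)) ≠ 0) (n : ℕ) :
    ∀ lam : ℕ → ℤ, IsPartitionSeq n lam →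
    φ (schur n lam 1 n) * vdm (fun i => φ (MvPolynomial.X (i + 1))) n =
      altDet (fun i => φ (MvPolynomial.X (i + 1))) n (expo n lam) := by
  induction n with
  | zero =>
    intro lam hl
    rw [schur_of_partition _ _ hl]
    have hu : ∀ T U : SSYT 0 lam 1 0, T = U := by
      intro T U
      apply SSYT.ext_entry
      funext i j
      rw [T.zero_outside i j (by omega), U.zero_outside i j (by omega)]
    let T0 : SSYT 0 lam 1 0 :=
      { entry := fun _ _ => 0
        zero_outside := fun _ _ _ => rfl
        lower := fun _ _ h => by omega
        upper := fun _ _ h => by omega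
        row_weak := fun _ _ _ h => by omega
        col_strict := fun _ _ _ _ h => by omega }
    have : (Finset.univ : Finset (SSYT 0 lam 1 0)) = {T0} := by
      ext T
      simp [hu T T0]
    rw [this, Finset.sum_singleton]
    simp [SSYT.weight, vdm, altDet]
  | succ n ih =>
    intro lam hl
    rw [altDet_branch hx n lam hl.1, schur_branch hl, map_sum, Finset.sum_mul, Finset.mul_sum]
    refine Finset.sum_congr rfl fun m hm => ?_
    have hm' : ∀ i : Fin n, lam (i + 1) ≤ m i ∧ m i ≤ lam i := by
      intro i
      have := Fintype.mem_piFinset.1 hm i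
      rwa [Finset.mem_Icc] at this
    rw [← ih _ (extz_partition hl hm')]
    have h1 : φ ((∏ i : Fin n, MvPolynomial.X (n + 1) ^ (lam i - m i).toNat) *
        MvPolynomial.X (n + 1) ^ (lam n).toNat) =
        (∏ i : Fin n, φ (MvPolynomial.X (n + 1)) ^ (lam i - m i)) *
          φ (MvPolynomial.X (n + 1)) ^ (lam n) := by
      rw [map_mul, map_prod, map_pow]
      congr 1
      · refine Finset.prod_congr rfl fun i _ => ?_
        rw [map_pow, ← zpow_natCast]
        congr 1
        have := (hm' i).2
        omega
      · rw [← zpow_natCast]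
        congr 1
        have := hl.2 n (by omega)
        omega
    rw [map_mul, h1]
    simp only [vdm]
    ring

/-- Logarithmic-derivative type identity. -/
theorem sum_det_updateRow {n : ℕ} (M : Matrix (Fin n) (Fin n) K) (d : Fin n → K) :
    ∑ i, (M.updateRow i (fun j => M i j * d j)).det = (∑ j, d j) * M.det := by
  have h1 : ∀ i, (M.updateRow i (fun j => M i j * d j)).det =
      ∑ j, M.adjugate j i * (M i j * d j) := by
    intro i
    rw [← Matrix.cramer_transpose_apply, Matrix.cramer_eq_adjugate_mulVec,
      ← Matrix.adjugate_transpose]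
    rfl
  simp_rw [h1]
  rw [Finset.sum_comm, Finset.sum_mul]
  refine Finset.sum_congr rfl fun j _ => ?_
  have h2 : (M.adjugate * M) j j = M.det := by rw [Matrix.adjugate_mul]; simp
  rw [← h2, Matrix.mul_apply, Finset.mul_sum]
  exact Finset.sum_congr rfl fun i _ => by ring

/-- Three-term Plücker relation. -/
theorem det_plucker {n : ℕ} (M : Matrix (Fin n) (Fin n) K) {t s : Fin n} (hts : t ≠ s)
    (a b : Fin n → K) :
    M.det * ((M.updateRow t a).updateRow s b).det =
      (M.updateRow t a).det * (M.updateRow s b).det -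
        (M.updateRow s a).det * (M.updateRow t b).det := by
  -- expand `det M • a` by Cramer
  have hc : M.det • a = ∑ j, (M.updateRow j a).det • M j := by
    have h := Matrix.mulVec_cramer M.transpose a
    rw [Matrix.det_transpose] at h
    rw [← h]
    ext i
    simp only [Matrix.mulVec, dotProduct, Matrix.transpose_apply, Finset.sum_apply, Pi.smul_apply,
      smul_eq_mul, Matrix.cramer_transpose_apply]
    exact Finset.sum_congr rfl fun j _ => mul_comm _ _
  let N := M.updateRow s b
  have hN : ∀ v, ((M.updateRow t v).updateRow s b) = N.updateRow t v := by
    intro v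
    ext i j
    simp only [N, Matrix.updateRow_apply]
    by_cases h1 : i = s
    · subst h1; simp [hts.symm]
    · simp [h1]
  rw [hN, ← Matrix.det_updateRow_smul, hc]
  have hlin : ∀ f : Fin n → (Fin n → K), (N.updateRow t (∑ j, f j)).det =
      ∑ j, (N.updateRow t (f j)).det := by
    intro f
    exact (Matrix.detRowAlternating (R := K) (n := Fin n)).toMultilinearMap.map_update_sum
      Finset.univ t f N
  rw [hlin]
  simp only [Matrix.det_updateRow_smul]
  rw [← Finset.sum_subset (Finset.subset_univ {t, s}), Finset.sum_pair hts]
  · have e1 : N.updateRow t (M t) = N := by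
      ext i j
      simp only [N, Matrix.updateRow_apply]
      by_cases h1 : i = t
      · subst h1; simp [hts]
      · simp [h1]
    have e2 : (N.updateRow t (M s)).det = - (M.updateRow t b).det := by
      have h := Matrix.det_permute (Equiv.swap t s) (M.updateRow t b)
      rw [Equiv.Perm.sign_swap hts] at h
      have : (M.updateRow t b).submatrix (Equiv.swap t s) id = N.updateRow t (M s) := by
        ext i j
        simp only [N, Matrix.updateRow_apply, Matrix.submatrix_apply, id]
        by_cases h1 : i = t
        · subst h1; simp [hts.symm]
        · by_cases h2 : i = s
          · subst h2; simp [h1]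
          · rw [Equiv.swap_apply_of_ne_of_ne h1 h2]; simp [h1, h2]
      rw [this] at h
      rw [h]; simp
    rw [e1, e2]
    simp only [N]
    ring
  · intro j _ hj
    simp only [Finset.mem_insert, Finset.mem_singleton, not_or] at hj
    rw [Matrix.det_zero_of_row_eq (M := N.updateRow t (M j)) (i := t) (j := j) (Ne.symm hj.1), mul_zero]
    ext i
    simp [N, Matrix.updateRow_apply, hj.1, hj.2]

end Determinants

section Alternants

variable {K : Type*} [Field K]

theorem altDet_congr (x : ℕ → K) {n : ℕ} {l l' : ℕ → ℤ} (h : ∀ j, j < n → l j = l' j) :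
    altDet x n l = altDet x n l' := by
  unfold altDet
  congr 1
  ext j i
  simp only [Matrix.of_apply]
  rw [h j j.2]

theorem altDet_eq_zero (x : ℕ → K) {n : ℕ} {l : ℕ → ℤ} {i i' : ℕ} (hi : i < n) (hi' : i' < n)
    (hne : i ≠ i') (h : l i = l i') : altDet x n l = 0 := by
  unfold altDet
  refine Matrix.det_zero_of_row_eq (i := ⟨i, hi⟩) (j := ⟨i', hi'⟩) ?_ ?_
  · intro h; exact hne (by simpa using h)
  · ext c; simp [h]

theorem altMat_update (x : ℕ → K) {n : ℕ} (l : ℕ → ℤ) (i : Fin n) (v : ℤ) :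
    (Matrix.of fun j c : Fin n => x c ^ (Function.update l i v) j) =
      (Matrix.of fun j c : Fin n => x c ^ l j).updateRow i (fun c => x c ^ v) := by
  ext j c
  rw [Matrix.updateRow_apply]
  by_cases h : j = i
  · subst h; simp
  · have : (j : ℕ) ≠ i := fun h' => h (Fin.ext h')
    simp [h, this]

theorem altDet_update (x : ℕ → K) {n : ℕ} (l : ℕ → ℤ) (i : Fin n) (v : ℤ) :
    altDet x n (Function.update l i v) =
      ((Matrix.of fun j c : Fin n => x c ^ l j).updateRow i (fun c => x c ^ v)).det := by
  unfold altDet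
  rw [altMat_update]

theorem altDet_sum {x : ℕ → K} (hx : ∀ i, x i ≠ 0) (n : ℕ) (l : ℕ → ℤ) :
    ∑ i ∈ Finset.range n, altDet x n (Function.update l i (l i - 1)) =
      (∑ c : Fin n, (x c)⁻¹) * altDet x n l := by
  rw [Finset.sum_range]
  unfold altDet
  rw [← sum_det_updateRow]
  refine Finset.sum_congr rfl fun i _ => ?_
  rw [altMat_update]
  congr 2
  funext c
  rw [zpow_sub_one₀ (hx c)]
  rfl

theorem altDet_shift {x : ℕ → K} (hx : ∀ i, x i ≠ 0) (n : ℕ) (l : ℕ → ℤ) :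
    altDet x n (fun j => l j + 1) = (∏ i : Fin n, x i) * altDet x n l := by
  unfold altDet
  rw [← Matrix.det_mul_row]
  congr 1
  ext j i
  simp only [Matrix.of_apply]
  rw [zpow_add_one₀ (hx i), mul_comm]

/-- The cycle on `[i,j]`. -/
def cyc (i j a : ℕ) : ℕ := if a < i ∨ j < a then a else if a = j then i else a + 1

theorem altDet_cyc (x : ℕ → K) {n : ℕ} (l : ℕ → ℤ) {i j : ℕ} (hij : i ≤ j) (hj : j < n) :
    altDet x n (fun a => l (cyc i j a)) = (-1) ^ (j - i) * altDet x n l := by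
  unfold altDet
  have : NeZero n := ⟨by omega⟩
  have hle : (⟨i, by omega⟩ : Fin n) ≤ ⟨j, hj⟩ := hij
  have h := Matrix.det_permute (Fin.cycleIcc ⟨i, by omega⟩ ⟨j, hj⟩)
    (Matrix.of fun j i : Fin n => x i ^ l j)
  rw [Fin.sign_cycleIcc_of_le hle] at h
  have h2 : (Matrix.of fun a c : Fin n => x c ^ l (cyc i j a)) =
      (Matrix.of fun j i : Fin n => x i ^ l j).submatrix
        (Fin.cycleIcc ⟨i, by omega⟩ ⟨j, hj⟩) id := by
    ext a c
    simp only [Matrix.of_apply, Matrix.submatrix_apply, id]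
    congr 2
    have ha := a.2
    unfold cyc
    by_cases h1 : (a : ℕ) < i
    · rw [Fin.cycleIcc_of_lt (show a < ⟨i, by omega⟩ from h1)]; simp [h1]
    · by_cases h2 : j < (a : ℕ)
      · rw [Fin.cycleIcc_of_gt (show ⟨j, hj⟩ < a from h2)]; simp [h2]
      · rw [if_neg (by omega)]
        by_cases h3 : (a : ℕ) = j
        · have : a = ⟨j, hj⟩ := Fin.ext h3
          rw [if_pos h3, this, Fin.cycleIcc_of_last hle]
        · rw [if_neg h3, Fin.cycleIcc_of_ge_of_lt (show (⟨i, by omega⟩ : Fin n) ≤ a from by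
            rw [Fin.le_def]; simp; omega) (show a < ⟨j, hj⟩ from by rw [Fin.lt_def]; simp; omega)]
          rw [Fin.val_add_one_of_lt']
          omega
  rw [h2, h]
  simp

theorem altDet_plucker (x : ℕ → K) {n : ℕ} (l : ℕ → ℤ) {t s : ℕ} (ht : t < n) (hs : s < n)
    (hts : t ≠ s) (a b : ℤ) :
    altDet x n l * altDet x n (Function.update (Function.update l t a) s b) =
      altDet x n (Function.update l t a) * altDet x n (Function.update l s b) -
        altDet x n (Function.update l s a) * altDet x n (Function.update l t b) := by
  have h := det_plucker (Matrix.of fun j c : Fin n => x c ^ l j) (t := ⟨t, ht⟩) (s := ⟨s, hs⟩)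
    (by intro h; exact hts (by simpa using h)) (fun c => x c ^ a) (fun c => x c ^ b)
  rw [← altMat_update, ← altMat_update, ← altMat_update, ← altMat_update, ← altMat_update] at h
  exact h

theorem skew_formula (φ : MvPolynomial ℕ ℤ →+* K)
    (hx : ∀ i, φ (MvPolynomial.X (i + 1)) ≠ 0) {k n : ℕ} (hkn : k ≤ n) {lam : ℕ → ℤ}
    (hl : IsPartitionSeq k lam) (hor : k < n ∨ ∀ i, i < k → 1 ≤ lam i) :
    φ (schurSkew1 k lam 1 n) * vdm (fun i => φ (MvPolynomial.X (i + 1))) n =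
      (∑ c : Fin n, (φ (MvPolynomial.X ((c : ℕ) + 1)))⁻¹) *
        altDet (fun i => φ (MvPolynomial.X (i + 1))) n (expo n (padz k lam)) -
      if k < n then altDet (fun i => φ (MvPolynomial.X (i + 1))) n
        (Function.update (expo n (padz k lam)) (n - 1) (-1)) else 0 := by
  set x : ℕ → K := fun i => φ (MvPolynomial.X (i + 1)) with hxdef
  set l := expo n (padz k lam) with hldef
  have h1 : φ (schurSkew1 k lam 1 n) * vdm x n =
      ∑ i ∈ Finset.range k, altDet x n (Function.update l i (l i - 1)) := by
    unfold schurSkew1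
    rw [map_sum, Finset.sum_mul]
    refine Finset.sum_congr rfl fun i hi => ?_
    rw [Finset.mem_range] at hi
    by_cases hp : IsPartitionSeq k (Function.update lam i (lam i - 1))
    · rw [schur_padz hkn hp, bialternant φ hx n _ (hp.padz n)]
      refine altDet_congr _ fun j _ => ?_
      by_cases hji : j = i
      · subst hji
        rw [Function.update_self]
        simp only [hldef, expo]
        rw [padz_lt hi, padz_lt hi, Function.update_self]
        ring
      · rw [Function.update_of_ne hji]
        simp only [hldef, expo, padz]
        rw [Function.update_of_ne hji]
    · rw [schur_of_not_partition _ _ hp, map_zero, zero_mul]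
      have hkey : i + 1 < n ∧ padz k lam (i + 1) = lam i := by
        by_contra hcon
        apply hp
        have hi0 := hl.2 i hi
        have hfact : (i + 1 < k → lam (i + 1) ≤ lam i - 1) ∧ 0 ≤ lam i - 1 := by
          by_cases hik : i + 1 < k
          · have h3 := hl.1 i hik
            have h4 := hl.2 (i + 1) hik
            rw [padz_lt hik] at hcon
            have : lam (i + 1) ≠ lam i := fun h => hcon ⟨by omega, h⟩
            exact ⟨fun _ => by omega, by omega⟩
          · rw [padz_ge (by omega)] at hcon
            refine ⟨fun h => absurd h hik, ?_⟩
            rcases hor with h | h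
            · have : (0 : ℤ) ≠ lam i := fun h' => hcon ⟨by omega, h'⟩
              omega
            · have := h i hi
              omega
        constructor
        · intro j hj
          by_cases h5 : j = i
          · subst h5
            rw [Function.update_self, Function.update_of_ne (by omega)]
            exact hfact.1 hj
          · rw [Function.update_of_ne h5]
            by_cases h6 : j + 1 = i
            · subst h6
              rw [Function.update_self]
              have := hl.1 j hj
              omega
            · rw [Function.update_of_ne h6]; exact hl.1 j hj
        · intro j hj
          by_cases h5 : j = i
          · subst h5
            rw [Function.update_self]; exact hfact.2
          · rw [Function.update_of_ne h5]; exact hl.2 j hj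
      symm
      refine altDet_eq_zero _ (i := i) (i' := i + 1) (by omega) hkey.1 (by omega) ?_
      rw [Function.update_self, Function.update_of_ne (by omega)]
      simp only [hldef, expo]
      rw [hkey.2, padz_lt hi]
      push_cast
      ring
  have h2 := altDet_sum (x := x) hx n l
  rw [h1]
  change _ = (∑ c : Fin n, (x c)⁻¹) * _ - _
  rw [← h2, ← Finset.sum_range_add_sum_Ico _ hkn]
  split_ifs with hlt
  · have h3 : ∑ i ∈ Finset.Ico k n, altDet x n (Function.update l i (l i - 1)) =
        altDet x n (Function.update l (n - 1) (l (n - 1) - 1)) := by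
      refine Finset.sum_eq_single_of_mem (n - 1) (by rw [Finset.mem_Ico]; omega) ?_
      intro i hi hne
      rw [Finset.mem_Ico] at hi
      refine altDet_eq_zero _ (i := i) (i' := i + 1) (by omega) (by omega) (by omega) ?_
      rw [Function.update_self, Function.update_of_ne (by omega)]
      simp only [hldef, expo]
      rw [padz_ge (by omega), padz_ge (by omega)]
      push_cast
      ring
    rw [h3]
    have h4 : l (n - 1) - 1 = -1 := by
      simp only [hldef, expo]
      rw [padz_ge (by omega)]
      omega
    rw [h4]
    ring
  · have : k = n := by omega
    subst this
    simp

theorem main_identity (φ : MvPolynomial ℕ ℤ →+* K)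
    (hx : ∀ i, φ (MvPolynomial.X (i + 1)) ≠ 0)
    (hinj : Function.Injective (fun i : ℕ => φ (MvPolynomial.X (i + 1))))
    (k t n : ℕ) (hk : 1 ≤ k) (ht : t ≤ k - 1) (hn : k ≤ n) (lam mu nu rho : ℕ → ℤ)
    (hdec : ∀ i, i + 1 < k → lam (i + 1) ≤ lam i) (hpos : ∀ i, i < k → 1 ≤ lam i)
    (hmu : mu = fun j => if j < t then lam j else lam (j + 1) - 1)
    (hnu : nu = fun j => if j < t then lam j + 1 else lam (j + 1))
    (hrho : rho = fun j => lam j - 1) :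
    φ (schurSkew1 k lam 1 n) * φ (schur (k - 1) mu 1 n) =
      φ (schurSkew1 (k - 1) mu 1 n) * φ (schur k lam 1 n) +
        φ (schur k rho 1 n) * φ (schur (k - 1) nu 1 n) := by
  have pl : IsPartitionSeq k lam := ⟨hdec, fun i hi => by have := hpos i hi; omega⟩
  have pm : IsPartitionSeq (k - 1) mu := by
    subst hmu
    constructor
    · intro i hi
      have h1 := hdec i (by omega)
      have h2 := hdec (i + 1) (by omega)
      dsimp only
      split_ifs <;> omega
    · intro i hi
      have h1 := hpos i (by omega)
      have h2 := hpos (i + 1) (by omega)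
      dsimp only
      split_ifs <;> omega
  have pn : IsPartitionSeq (k - 1) nu := by
    subst hnu
    constructor
    · intro i hi
      have h1 := hdec i (by omega)
      have h2 := hdec (i + 1) (by omega)
      dsimp only
      split_ifs <;> omega
    · intro i hi
      have h1 := hpos i (by omega)
      have h2 := hpos (i + 1) (by omega)
      dsimp only
      split_ifs <;> omega
  have pr : IsPartitionSeq k rho := by
    subst hrho
    constructor
    · intro i hi
      have h1 := hdec i hi
      dsimp only
      omega
    · intro i hi
      have h1 := hpos i hi
      dsimp only
      omega
  have sl := skew_formula φ hx hn pl (Or.inr hpos)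
  have sm := skew_formula φ hx (by omega : k - 1 ≤ n) pm (Or.inl (by omega))
  rw [if_pos (by omega : k - 1 < n)] at sm
  have bl := bialternant φ hx n _ (pl.padz n)
  have bm := bialternant φ hx n _ (pm.padz n)
  have bn := bialternant φ hx n _ (pn.padz n)
  have br := bialternant φ hx n _ (pr.padz n)
  rw [← schur_padz hn pl] at bl
  rw [← schur_padz (by omega) pm] at bm
  rw [← schur_padz (by omega) pn] at bn
  rw [← schur_padz hn pr] at br
  have hV := vdm_ne_zero hinj n
  set x : ℕ → K := fun i => φ (MvPolynomial.X (i + 1)) with hxdef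
  have hP : (∏ i : Fin n, x i) ≠ 0 := Finset.prod_ne_zero_iff.2 fun i _ => hx i
  set l := expo n (padz k lam) with hldef
  set V := vdm x n with hVdef
  -- μ
  have em : altDet x n (expo n (padz (k - 1) mu)) =
      (-1) ^ (k - 1 - t) * altDet x n (Function.update l t ((n : ℤ) - k)) := by
    rw [← altDet_cyc x _ ht (by omega : k - 1 < n)]
    refine altDet_congr _ fun j hj => ?_
    simp only [expo, padz, cyc, hldef, hmu, Function.update_apply]
    split_ifs <;> omega
  -- ν
  have en : altDet x n (expo n (padz (k - 1) nu)) = (∏ i : Fin n, x i) *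
      ((-1) ^ (n - 1 - t) * altDet x n (Function.update l t (-1))) := by
    rw [← altDet_cyc x _ (by omega : t ≤ n - 1) (by omega : n - 1 < n), ← altDet_shift hx]
    refine altDet_congr _ fun j hj => ?_
    simp only [expo, padz, cyc, hldef, hnu, Function.update_apply]
    split_ifs <;> omega
  -- ρ
  have er := altDet_shift (x := x) hx n (expo n (padz k rho))
  have hfin : ∀ a b c d e f : K, a * V * (b * V) = c * V * (d * V) + e * V * (f * V) →
      a * b = c * d + e * f := by
    intro a b c d e f h
    have h2 : V * V * (a * b) = V * V * (c * d + e * f) := by linear_combination h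
    exact mul_left_cancel₀ (mul_ne_zero hV hV) h2
  apply hfin
  rw [sl, sm, bl, bm, bn, br, em, en]
  rcases hn.lt_or_eq with hlt | heq
  · rw [if_pos hlt]
    have elm : altDet x n (Function.update (expo n (padz (k - 1) mu)) (n - 1) (-1)) =
        (-1) ^ (k - 1 - t) *
          altDet x n (Function.update (Function.update l t ((n : ℤ) - k)) (n - 1) (-1)) := by
      rw [← altDet_cyc x _ ht (by omega : k - 1 < n)]
      refine altDet_congr _ fun j hj => ?_
      simp only [expo, padz, cyc, hldef, hmu, Function.update_apply]
      split_ifs <;> omega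
    have er2 : altDet x n (Function.update l (n - 1) ((n : ℤ) - k)) = (-1) ^ (n - 1 - k) *
        altDet x n (fun j => expo n (padz k rho) j + 1) := by
      rw [← altDet_cyc x _ (by omega : k ≤ n - 1) (by omega : n - 1 < n)]
      refine altDet_congr _ fun j hj => ?_
      simp only [expo, padz, cyc, hldef, hrho, Function.update_apply]
      split_ifs <;> omega
    rw [er] at er2
    have pk := altDet_plucker x (n := n) l (t := t) (s := n - 1) (by omega) (by omega) (by omega)
      ((n : ℤ) - k) (-1)
    rw [elm]
    have sgn : (-1 : K) ^ (n - 1 - t) = - ((-1) ^ (k - 1 - t) * (-1) ^ (n - 1 - k)) := by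
      rw [show n - 1 - t = (k - 1 - t) + (n - 1 - k) + 1 by omega, pow_succ, pow_add]
      ring
    rw [sgn]
    rw [er2] at pk
    linear_combination ((-1 : K) ^ (k - 1 - t)) * pk
  · subst heq
    rw [if_neg (lt_irrefl _)]
    have elm : altDet x k (Function.update (expo k (padz (k - 1) mu)) (k - 1) (-1)) =
        (-1) ^ (k - 1 - t) * altDet x k (Function.update l t (-1)) := by
      rw [← altDet_cyc x _ ht (by omega : k - 1 < k)]
      refine altDet_congr _ fun j hj => ?_
      simp only [expo, padz, cyc, hldef, hmu, Function.update_apply]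
      split_ifs <;> omega
    have er2 : altDet x k (fun j => expo k (padz k rho) j + 1) = altDet x k l := by
      refine altDet_congr _ fun j hj => ?_
      simp only [expo, padz, hldef, hrho]
      split_ifs
      ring
    rw [er] at er2
    rw [elm, ← er2]
    ring

end Alternants

/-- for a partition `λ = (λ_1 ≥ … ≥ λ_k ≥ 1)`, `0 ≤ t ≤ k-1` and `n ≥ k`,
with `μ = (λ_1,…,λ_t,λ_{t+2}-1,…,λ_k-1)`, `ν = (λ_1+1,…,λ_t+1,λ_{t+2},…,λ_k)` and
`ρ = (λ_1-1,…,λ_k-1)`: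
`s^{[n]}_{λ/1} · s^{[n]}_μ = s^{[n]}_{μ/1} · s^{[n]}_λ + s^{[n]}_ρ · s^{[n]}_ν`. -/
theorem stmt_15 (k t n : ℕ) (hk : 1 ≤ k) (ht : t ≤ k - 1) (hn : k ≤ n) (lam : ℕ → ℤ)
    (hdec : ∀ i, i + 1 < k → lam (i + 1) ≤ lam i) (hpos : ∀ i, i < k → 1 ≤ lam i) :
    schurSkew1 k lam 1 n *
        schur (k - 1) (fun j => if j < t then lam j else lam (j + 1) - 1) 1 n =
      schurSkew1 (k - 1) (fun j => if j < t then lam j else lam (j + 1) - 1) 1 n *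
          schur k lam 1 n +
        schur k (fun j => lam j - 1) 1 n *
          schur (k - 1) (fun j => if j < t then lam j + 1 else lam (j + 1)) 1 n := by
  let φ : MvPolynomial ℕ ℤ →+* FractionRing (MvPolynomial ℕ ℤ) :=
    algebraMap (MvPolynomial ℕ ℤ) (FractionRing (MvPolynomial ℕ ℤ))
  have hφ : Function.Injective φ := IsFractionRing.injective _ _
  apply hφ
  rw [map_add, map_mul, map_mul, map_mul]
  refine main_identity φ ?_ ?_ k t n hk ht hn lam _ _ _ hdec hpos rfl rfl rfl
  · intro i h
    exact MvPolynomial.X_ne_zero (i + 1) (hφ (by rw [h, map_zero]))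
  · intro i j h
    have := MvPolynomial.X_injective (hφ h)
    omega
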